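/- arXiv:1411.1832 — 4 statements merged into one kernel-verified Lean document; each statement's English description precedes it below -/
import Mathlib

section
/- Let d ≥ 1 and n ≥ 1, and let x, y : Fin n → EuclideanSpace ℝ (Fin d) be injective maps (configurations of n distinct labelled points in ℝ^d). Assume the points of x are not all collinear, i.e. ¬ Collinear ℝ (Set.range x). If for all indices i ≠ j the unit direction vectors agree, ‖y j − y i‖⁻¹ • (y j − y i) = ‖x j − x i‖⁻¹ • (x j − x i), then y is obtained from x by a positive scaling and a translation: there exist a real number c > 0 and a vector v ∈ EuclideanSpace ℝ (Fin d) such that y i = c • x i + v for every i. -/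
theorem aux_key {E : Type*} [AddCommGroup E] [Module ℝ E] (u v : E) (hu : u ≠ 0)
    (hv : ∀ r : ℝ, v ≠ r • u) (a b l : ℝ) (h : a • v - b • u = l • (v - u)) : a = b := by
  have h1 : (a - l) • v = (b - l) • u := by
    rw [sub_smul, sub_smul, sub_eq_sub_iff_add_eq_add]
    rw [smul_sub, sub_eq_sub_iff_add_eq_add] at h
    rw [h, add_comm]
  have h2 : a - l = 0 := by
    by_contra hne
    apply hv ((a - l)⁻¹ * (b - l))
    rw [mul_smul, ← h1, inv_smul_smul₀ hne]
  rw [h2, zero_smul] at h1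
  have h3 : b - l = 0 := (smul_eq_zero.mp h1.symm).resolve_right hu
  linarith

/-- Two injective configurations of `n` points in `ℝ^d` with identical pairwise
unit direction vectors, the first of which is non-collinear, differ by a
positive scaling and a translation. -/
theorem direction_map_injective_off_collinear
    (d n : ℕ) (hd : 1 ≤ d) (hn : 1 ≤ n)
    (x y : Fin n → EuclideanSpace ℝ (Fin d))
    (hx : Function.Injective x) (hy : Function.Injective y)
    (hcol : ¬ Collinear ℝ (Set.range x))
    (hdir : ∀ i j, i ≠ j →
      ‖y j - y i‖⁻¹ • (y j - y i) = ‖x j - x i‖⁻¹ • (x j - x i)) :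
    ∃ c : ℝ, 0 < c ∧ ∃ v : EuclideanSpace ℝ (Fin d),
      ∀ i, y i = c • x i + v := by
  have hl : ∀ i j, ∃ l : ℝ, 0 < l ∧ y j - y i = l • (x j - x i) := by
    intro i j
    by_cases hij : i = j
    · subst hij
      exact ⟨1, one_pos, by simp⟩
    have hxp : 0 < ‖x j - x i‖ := norm_pos_iff.mpr (sub_ne_zero.mpr fun h => hij (hx h).symm)
    have hyp : 0 < ‖y j - y i‖ := norm_pos_iff.mpr (sub_ne_zero.mpr fun h => hij (hy h).symm)
    refine ⟨‖y j - y i‖ * ‖x j - x i‖⁻¹, by positivity, ?_⟩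
    rw [mul_smul, ← hdir i j hij, smul_inv_smul₀ hyp.ne']
  choose l hlp hle using hl
  let o : Fin n := ⟨0, hn⟩
  have hc : ∀ v : EuclideanSpace ℝ (Fin d), ∃ k, ∀ r : ℝ, x k - x o ≠ r • v := by
    intro v
    by_contra! hcon
    apply hcol
    rw [collinear_iff_of_mem (Set.mem_range_self o)]
    refine ⟨v, ?_⟩
    rintro _ ⟨k, rfl⟩
    obtain ⟨r, hr⟩ := hcon k
    exact ⟨r, by rw [← hr]; simp⟩
  have key : ∀ j k, x j - x o ≠ 0 → (∀ r : ℝ, x k - x o ≠ r • (x j - x o)) → l o k = l o j := by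
    intro j k hj hk
    refine aux_key _ _ hj hk _ _ (l j k) ?_
    rw [← hle, ← hle, sub_sub_sub_cancel_right, sub_sub_sub_cancel_right, ← hle]
  obtain ⟨j, hj⟩ := hc 0
  have hj0 : x j - x o ≠ 0 := by simpa using hj 0
  obtain ⟨k, hk⟩ := hc (x j - x o)
  have main : ∀ m, x m - x o ≠ 0 → l o m = l o j := by
    intro m hm
    by_cases hp : ∀ r : ℝ, x m - x o ≠ r • (x j - x o)
    · exact key j m hj0 hp
    · push Not at hp
      obtain ⟨r, hr⟩ := hp
      rw [← key j k hj0 hk]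
      refine (key m k hm fun s hs => hk (s * r) ?_).symm
      rw [hs, hr, mul_smul]
  refine ⟨l o j, hlp o j, y o - l o j • x o, fun m => ?_⟩
  have hm : y m - y o = l o j • (x m - x o) := by
    by_cases h0 : x m - x o = 0
    · have : m = o := hx (sub_eq_zero.mp h0)
      simp [this]
    · rw [← main m h0, hle]
  rw [sub_eq_iff_eq_add.mp hm, smul_sub]
  abel
end

section
/- Fix n ≥ 1. Let σ : Fin (n+1) → Fin n be the monotone surjection that is the identity on i < n and sends n to n−1 (that is, σ identifies the two top elements n−1 and n of {0,…,n}). Let P[n] denote the partially ordered set of nonempty finite subsets of Fin (n+1), i.e. {S : Finset (Fin (n+1)) // S.Nonempty} ordered by inclusion, regarded as a category with a unique morphism S ⟶ T exactly when S ⊆ T, and similarly let P[n−1] be the poset category of nonempty finite subsets of Fin n. Then the functor I : P[n] ⥤ P[n−1] induced by the monotone map S ↦ S.image σ is an initial functor (CategoryTheory.Functor.Initial), i.e. for every object S of P[n−1] the costructured arrow category of objects T of P[n] with I(T) ⊆ S is connected; indeed each such category has a terminal object, namely the preimage σ⁻¹(S). -/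
open CategoryTheory

/-- The monotone surjection `{0,…,n} → {0,…,n-1}` that is the identity on
`i < n` and sends `n` to `n-1`. -/
def lastCodegeneracy (n : ℕ) (hn : 1 ≤ n) : Fin (n + 1) → Fin n :=
  fun i => if h : (i : ℕ) < n then ⟨i, h⟩ else ⟨n - 1, Nat.sub_lt hn Nat.one_pos⟩

/-- The poset of nonempty finite subsets of `Fin m`, ordered by inclusion,
regarded as a category. -/
abbrev NonemptySubsetPoset (m : ℕ) := {S : Finset (Fin m) // S.Nonempty}

/-- The map `P_ν[n] → P_ν[n-1]` induced by the monotone surjection identifying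
the two top elements. -/
def imageMap (n : ℕ) (hn : 1 ≤ n) :
    NonemptySubsetPoset (n + 1) → NonemptySubsetPoset n :=
  fun S => ⟨S.1.image (lastCodegeneracy n hn), S.2.image _⟩

theorem imageMap_monotone (n : ℕ) (hn : 1 ≤ n) : Monotone (imageMap n hn) :=
  fun _ _ h => Finset.image_subset_image h

/-- The functor `i_n : P_ν[n] ⥤ P_ν[n-1]`. -/
def imageFunctor (n : ℕ) (hn : 1 ≤ n) :
    NonemptySubsetPoset (n + 1) ⥤ NonemptySubsetPoset n :=
  (imageMap_monotone n hn).functor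

/-- The functor `i_n : P_ν[n] ⥤ P_ν[n-1]`, which changes occurrences of `n` in
a subset to `n-1`, is left cofinal (initial); indeed for every nonempty
`S ⊆ {0,…,n-1}` the costructured arrow category has a terminal object, namely
the preimage of `S`. -/
theorem imageFunctor_initial (n : ℕ) (hn : 1 ≤ n) :
    (imageFunctor n hn).Initial ∧
      ∀ S : NonemptySubsetPoset n,
        ∃ T : CostructuredArrow (imageFunctor n hn) S,
          T.left.1 = Finset.univ.filter (fun i => lastCodegeneracy n hn i ∈ S.1) ∧
          Nonempty (Limits.IsTerminal T) := by
  have key : ∀ S : NonemptySubsetPoset n,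
        ∃ T : CostructuredArrow (imageFunctor n hn) S,
          T.left.1 = Finset.univ.filter (fun i => lastCodegeneracy n hn i ∈ S.1) ∧
          Nonempty (Limits.IsTerminal T) := by
    intro S
    have hne : (Finset.univ.filter (fun i => lastCodegeneracy n hn i ∈ S.1)).Nonempty := by
      obtain ⟨j, hj⟩ := S.2
      refine ⟨j.castSucc, ?_⟩
      have : lastCodegeneracy n hn j.castSucc = j := by
        simp [lastCodegeneracy]
      simp [this, hj]
    let P : NonemptySubsetPoset (n + 1) := ⟨_, hne⟩
    have hP : (imageFunctor n hn).obj P ≤ S := by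
      change Finset.image _ _ ⊆ S.1
      intro x hx
      obtain ⟨i, hi, rfl⟩ := Finset.mem_image.1 hx
      exact (Finset.mem_filter.1 hi).2
    refine ⟨CostructuredArrow.mk (Y := P) (homOfLE hP), rfl, ⟨?_⟩⟩
    refine Limits.IsTerminal.ofUniqueHom (fun X => CostructuredArrow.homMk (homOfLE ?_)
      (Subsingleton.elim _ _)) (fun X m => ?_)
    · intro i hi
      have h : Finset.image (lastCodegeneracy n hn) X.left.1 ⊆ S.1 := leOfHom X.hom
      exact Finset.mem_filter.2 ⟨Finset.mem_univ _, h (Finset.mem_image_of_mem _ hi)⟩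
    · exact CostructuredArrow.hom_ext _ _ (Subsingleton.elim _ _)
  refine ⟨⟨fun S => ?_⟩, key⟩
  obtain ⟨T, -, ⟨hT⟩⟩ := key S
  exact isConnected_of_isTerminal _ hT
end

section
/- Fix n ≥ 1. In ℝⁿ (as functions Fin n → ℝ) define A = {t | Monotone t ∧ ∀ i, t i ∈ Set.Icc (−1) 1}, the set of weakly increasing n-tuples with entries in [−1,1], and B = {t | StrictMono t ∧ ∀ i, t i ∈ Set.Ioo (−1) 1}, the set of strictly increasing n-tuples with entries in (−1,1). For j : Fin (n+1) define the vertex v j : Fin n → ℝ by (v j) i = −1 if (i : ℕ) < (j : ℕ) and (v j) i = 1 otherwise. Then: (a) A is the closure of B; (b) A equals the convex hull convexHull ℝ (Set.range v) of the n+1 vertices; and (c) the family v is affinely independent (AffineIndependent ℝ v). Consequently A is an n-simplex with vertices v 0, …, v n. -/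
lemma tele_aux (s : ℕ → ℝ) (i m : ℕ) :
    ∑ k ∈ Finset.range m, (s (k+1) - s k) / 2 * (if i < k then -1 else 1) =
      if m ≤ i + 1 then (s m - s 0) / 2 else s (i+1) - (s m + s 0) / 2 := by
  induction m with
  | zero => simp
  | succ m ih =>
    rw [Finset.sum_range_succ, ih]
    rcases lt_trichotomy m (i+1) with h | h | h
    · rw [if_pos (by omega), if_neg (by omega), if_pos (by omega)]; ring
    · subst h
      rw [if_pos (by omega), if_pos (by omega), if_neg (by omega)]; ring
    · rw [if_neg (by omega), if_pos (by omega), if_neg (by omega)]; ring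

/-- The set of weakly increasing `n`-tuples in `[-1,1]` is the closure of the
set of strictly increasing `n`-tuples in `(-1,1)`, and is the `n`-simplex with
vertices `v 0, …, v n`, where `(v j) i = -1` if `i < j` and `1` otherwise. -/
theorem ordered_configurations_in_interval_form_simplex
    (n : ℕ) (hn : 1 ≤ n)
    (A B : Set (Fin n → ℝ)) (v : Fin (n + 1) → Fin n → ℝ)
    (hA : A = {t | Monotone t ∧ ∀ i, t i ∈ Set.Icc (-1 : ℝ) 1})
    (hB : B = {t | StrictMono t ∧ ∀ i, t i ∈ Set.Ioo (-1 : ℝ) 1})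
    (hv : ∀ j i, v j i = if (i : ℕ) < (j : ℕ) then -1 else 1) :
    A = closure B ∧ A = convexHull ℝ (Set.range v) ∧ AffineIndependent ℝ v := by
  refine ⟨?_, ?_, ?_⟩
  · apply Set.Subset.antisymm
    · intro t ht
      rw [hA] at ht
      obtain ⟨hm, hI⟩ := ht
      let b : Fin n → ℝ := fun i => 2 * ((i : ℝ) + 1) / (n + 1) - 1
      have hn0 : (0 : ℝ) < n + 1 := by positivity
      have hb : StrictMono b := by
        intro i j hij
        have : (i : ℝ) < j := by exact_mod_cast hij
        simp only [b]
        gcongr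
      have hb1 : ∀ i, -1 < b i := by
        intro i
        have : (0 : ℝ) < 2 * ((i : ℝ) + 1) / (n + 1) := by positivity
        simp only [b]; linarith
      have hb2 : ∀ i, b i < 1 := by
        intro i
        have h1 : (i : ℝ) < n := by exact_mod_cast i.2
        have : 2 * ((i : ℝ) + 1) / (n + 1) < 2 := by
          rw [div_lt_iff₀ hn0]; linarith
        simp only [b]; linarith
      have hc : Filter.Tendsto (fun e : ℝ => (fun i => (1 - e) * t i + e * b i))
          (nhdsWithin 0 (Set.Ioi 0)) (nhds t) := by
        have h : Continuous (fun e : ℝ => (fun i => (1 - e) * t i + e * b i)) := by fun_prop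
        have h2 := h.tendsto 0
        simp only [sub_zero, one_mul, zero_mul, add_zero] at h2
        exact h2.mono_left nhdsWithin_le_nhds
      refine mem_closure_of_tendsto hc ?_
      filter_upwards [Ioo_mem_nhdsGT (zero_lt_one (α := ℝ))] with e he
      rw [hB]
      obtain ⟨he0, he1⟩ := he
      refine ⟨?_, ?_⟩
      · intro i j hij
        have h1 := hm hij.le
        have h2 := hb hij
        have h3 := mul_le_mul_of_nonneg_left h1 (sub_nonneg.2 he1.le)
        have h4 := mul_lt_mul_of_pos_left h2 he0
        show _ + _ < _ + _
        linarith
      · intro i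
        obtain ⟨h1, h2⟩ := hI i
        have h3 := hb1 i
        have h4 := hb2 i
        constructor
        · nlinarith
        · nlinarith
    · apply closure_minimal
      · rw [hA, hB]
        rintro t ⟨h1, h2⟩
        exact ⟨h1.monotone, fun i => Set.Ioo_subset_Icc_self (h2 i)⟩
      · rw [hA]
        have : {t : Fin n → ℝ | Monotone t ∧ ∀ i, t i ∈ Set.Icc (-1 : ℝ) 1} =
            (⋂ i, ⋂ j, ⋂ _ : i ≤ j, {t | t i ≤ t j}) ∩ ⋂ i, {t | t i ∈ Set.Icc (-1 : ℝ) 1} := by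
          ext t; simp [Monotone]
        rw [this]
        refine IsClosed.inter ?_ ?_
        · refine isClosed_iInter fun i => isClosed_iInter fun j => isClosed_iInter fun _ => ?_
          exact isClosed_le (continuous_apply i) (continuous_apply j)
        · exact isClosed_iInter fun i => isClosed_Icc.preimage (continuous_apply i)
  · apply Set.Subset.antisymm
    · intro t ht
      rw [hA] at ht
      obtain ⟨hm, hI⟩ := ht
      let s : ℕ → ℝ := fun k => if k = 0 then -1 else if h : k - 1 < n then t ⟨k - 1, h⟩ else 1
      have hs0 : s 0 = -1 := by simp [s]
      have hs1 : ∀ i : Fin n, s (i + 1) = t i := by intro i; simp [s]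
      have hsn : s (n + 1) = 1 := by simp [s]
      have hsm : ∀ k, k ≤ n → s k ≤ s (k+1) := by
        intro k hk
        rcases Nat.eq_zero_or_pos k with rfl | h0
        · rw [hs0]
          have := hs1 ⟨0, hn⟩
          simp only at this
          rw [this]; exact (hI _).1
        · obtain ⟨l, rfl⟩ : ∃ l, k = l + 1 := ⟨k - 1, by omega⟩
          have h1 := hs1 ⟨l, hk⟩
          simp only at h1
          rw [h1]
          rcases hk.lt_or_eq with h | h
          · have h2 := hs1 ⟨l+1, h⟩
            simp only at h2
            rw [h2]
            apply hm
            simp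
          · rw [h, hsn]; exact (hI _).2
      have ht : t = ∑ j : Fin (n+1), ((s (j+1) - s j) / 2) • v j := by
        ext i
        simp only [Finset.sum_apply, Pi.smul_apply, smul_eq_mul, hv]
        rw [Fin.sum_univ_eq_sum_range
          (fun k => (s (k+1) - s k) / 2 * (if (i : ℕ) < k then -1 else 1)), tele_aux,
          if_neg (by omega), hs0, hsn, hs1]
        ring
      rw [ht]
      refine (convex_convexHull ℝ _).sum_mem ?_ ?_ ?_
      · intro j _
        have := hsm j (by omega)
        linarith
      · rw [Fin.sum_univ_eq_sum_range (fun k => (s (k+1) - s k) / 2), ← Finset.sum_div,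
          Finset.sum_range_sub, hs0, hsn]
        norm_num
      · intro j _
        exact subset_convexHull ℝ _ ⟨j, rfl⟩
    · apply convexHull_min
      · rintro _ ⟨j, rfl⟩
        rw [hA]
        refine ⟨?_, ?_⟩
        · intro a b hab
          have : (a : ℕ) ≤ b := hab
          rw [hv, hv]
          split_ifs <;> first | omega | norm_num
        · intro i
          rw [hv]
          split_ifs <;> norm_num
      · rw [hA]
        rintro x ⟨hx, hx'⟩ y ⟨hy, hy'⟩ a b ha hb hab
        refine ⟨(hx.const_smul ha).add (hy.const_smul hb), fun i => ?_⟩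
        exact (convex_Icc (-1 : ℝ) 1) (hx' i) (hy' i) ha hb hab
  · rw [affineIndependent_iff]
    intro s w hw hs
    have key : ∀ m : ℕ, m ≤ n → ∑ j ∈ s, (if (j : ℕ) ≤ m then w j else 0) = 0 := by
      intro m hm
      rcases hm.lt_or_eq with h | h
      · have h1 := congrFun hs ⟨m, h⟩
        simp only [Finset.sum_apply, Pi.smul_apply, smul_eq_mul, hv, Pi.zero_apply] at h1
        have : ∑ j ∈ s, (if (j : ℕ) ≤ m then w j else 0) =
            (∑ j ∈ s, w j + ∑ j ∈ s, w j * (if m < (j : ℕ) then -1 else 1)) / 2 := by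
          rw [← Finset.sum_add_distrib, Finset.sum_div]
          refine Finset.sum_congr rfl fun j _ => ?_
          by_cases hj : (j : ℕ) ≤ m
          · rw [if_pos hj, if_neg (by omega)]; ring
          · rw [if_neg hj, if_pos (by omega)]; ring
        rw [this, hw, h1]; simp
      · rw [← hw]
        refine Finset.sum_congr rfl fun j _ => ?_
        rw [if_pos (by omega)]
    have key2 : ∀ m : ℕ, m ≤ n → ∑ j ∈ s, (if (j : ℕ) < m then w j else 0) = 0 := by
      intro m hm
      cases m with
      | zero => simp
      | succ m => simpa only [Nat.lt_succ_iff] using key m (by omega)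
    intro j hj
    have h1 := key j (by omega)
    have h2 := key2 j (by omega)
    have : ∑ k ∈ s, (if k = j then w k else 0) = 0 := by
      have h3 := congrArg₂ (fun a b : ℝ => a - b) h1 h2
      simp only [← Finset.sum_sub_distrib, sub_self] at h3
      refine Eq.trans ?_ h3
      refine Finset.sum_congr rfl fun k _ => ?_
      rcases lt_trichotomy (k : ℕ) j with h | h | h
      · rw [if_neg (by rintro rfl; omega), if_pos h.le, if_pos h]; ring
      · rw [if_pos (Fin.ext h), if_pos h.le, if_neg (by omega)]; ring
      · rw [if_neg (by rintro rfl; omega), if_neg (by omega), if_neg (by omega)]; ring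
    simpa [hj] using this
end

section
/- Fix n ≥ 1 and work in the free Lie algebra L = FreeLieAlgebra ℤ (Fin (n+1)) over the integers on generators x_i = FreeLieAlgebra.of i for i : Fin (n+1). For each permutation σ : Equiv.Perm (Fin n), let w σ ∈ L be the right-normed iterated bracket w σ = ⁅x_{σ(0)}, ⁅x_{σ(1)}, …, ⁅x_{σ(n−1)}, x_n⁆ … ⁆⁆, where each index σ(i) ∈ Fin n is viewed in Fin (n+1) via Fin.castSucc. Then the family w : Equiv.Perm (Fin n) → L is linearly independent over ℤ; in particular these n! elements span a free ℤ-submodule of L of rank n!. -/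
/-- The right-normed iterated bracket
`⁅x_{σ 0}, ⁅x_{σ 1}, …, ⁅x_{σ (n-1)}, x_n⁆ … ⁆⁆` in the free Lie algebra over
`ℤ` on generators `x_0, …, x_n`. -/
noncomputable def rightNormedBracket (n : ℕ) (σ : Equiv.Perm (Fin n)) :
    FreeLieAlgebra ℤ (Fin (n + 1)) :=
  (List.finRange n).foldr
    (fun i acc => ⁅FreeLieAlgebra.of ℤ (Fin.castSucc (σ i)), acc⁆)
    (FreeLieAlgebra.of ℤ (Fin.last n))

/-- Images of generators: the first `n` act by left multiplication on the free algebra summand,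
the last one is the inclusion of the unit. -/
noncomputable def rnbGen (n : ℕ) (j : Fin (n + 1)) :
    Module.End ℤ (MonoidAlgebra ℤ (FreeMonoid (Fin n)) × ℤ) :=
  Fin.lastCases (motive := fun _ => Module.End ℤ (MonoidAlgebra ℤ (FreeMonoid (Fin n)) × ℤ))
    ((LinearMap.inl ℤ _ _).comp
      ((LinearMap.toSpanSingleton ℤ _ 1).comp (LinearMap.snd ℤ _ _)))
    (fun i => (LinearMap.inl ℤ _ _).comp
      ((LinearMap.mulLeft ℤ (MonoidAlgebra.of ℤ _ (FreeMonoid.of i))).comp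
        (LinearMap.fst ℤ _ _))) j

section

attribute [local instance] LieRing.ofAssociativeRing

theorem rnb_aux (n : ℕ) (f : Fin n → Fin n) (l : List (Fin n))
    (p : MonoidAlgebra ℤ (FreeMonoid (Fin n)) × ℤ) :
    FreeLieAlgebra.lift ℤ (rnbGen n) (l.foldr
      (fun i acc => ⁅FreeLieAlgebra.of ℤ (Fin.castSucc (f i)), acc⁆)
      (FreeLieAlgebra.of ℤ (Fin.last n))) p =
    (p.2 • MonoidAlgebra.of ℤ _ (FreeMonoid.ofList (l.map f)), 0) := by
  induction l generalizing p with
  | nil => simp [rnbGen, MonoidAlgebra.one_def]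
  | cons a l ih =>
    rw [List.foldr_cons, LieHom.map_lie, FreeLieAlgebra.lift_of_apply, LieRing.of_associative_ring_bracket,
      LinearMap.sub_apply, Module.End.mul_apply, Module.End.mul_apply]
    rw [ih, ih]
    simp [rnbGen, FreeMonoid.ofList_cons, MonoidAlgebra.single_mul_single]

/-- Evaluation of the representation at `(0, 1)`. -/
noncomputable def rnbPhi (n : ℕ) :
    FreeLieAlgebra ℤ (Fin (n + 1)) →ₗ[ℤ] MonoidAlgebra ℤ (FreeMonoid (Fin n)) :=
  let g : FreeLieAlgebra ℤ (Fin (n + 1)) →+ MonoidAlgebra ℤ (FreeMonoid (Fin n)) :=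
    { toFun := fun x => (FreeLieAlgebra.lift ℤ (rnbGen n) x (0, 1)).1
      map_zero' := by rw [map_zero]; rfl
      map_add' := fun x y => by rw [map_add]; rfl }
  { g with
    map_smul' := fun c x => by
      have := map_intCast_smul g ℤ ℤ c x
      simpa using this }

theorem rnbPhi_apply (n : ℕ) (σ : Equiv.Perm (Fin n)) :
    rnbPhi n (rightNormedBracket n σ) =
      MonoidAlgebra.of ℤ _ (FreeMonoid.ofList ((List.finRange n).map σ)) :=
  (congrArg Prod.fst (rnb_aux n σ (List.finRange n) (0, 1))).trans (one_smul _ _)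

end

/-- The `n!` right-normed multilinear brackets, in which the last generator is
fixed in last position and the remaining `n` generators are permuted, are
linearly independent over `ℤ` in the free Lie ring. -/
theorem rightNormedBrackets_linearIndependent (n : ℕ) (hn : 1 ≤ n) :
    LinearIndependent ℤ (fun σ : Equiv.Perm (Fin n) => rightNormedBracket n σ) := by
  apply LinearIndependent.of_comp (rnbPhi n)
  have h : ((rnbPhi n) ∘ fun σ : Equiv.Perm (Fin n) => rightNormedBracket n σ) =
      (fun m => MonoidAlgebra.of ℤ (FreeMonoid (Fin n)) m) ∘
        (fun σ : Equiv.Perm (Fin n) => FreeMonoid.ofList ((List.finRange n).map σ)) := by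
    funext σ
    exact rnbPhi_apply n σ
  rw [h]
  refine LinearIndependent.comp ?_ _ ?_
  · exact (MonoidAlgebra.basis (FreeMonoid (Fin n)) ℤ).linearIndependent
  · intro σ τ hst
    have h2 := FreeMonoid.ofList.injective hst
    ext i
    have := List.map_inj_left.1 h2 i (List.mem_finRange i)
    rw [this]
end
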